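/- Let λ > 0 and ε > 0, and suppose KL(π^λ ‖ q) > ε. Suppose λ' ≥ λ satisfies KL(π^{λ'} ‖ q) = ε. Then π^{λ'} is optimal for the per-state constrained Lagrangian problem: for every probability distribution p on 𝒜 with KL(p ‖ q) ≤ ε, one has Σ_a p(a) A(a) − λ · KL(p ‖ q) ≤ Σ_a π^{λ'}(a) A(a) − λ · KL(π^{λ'} ‖ q). -/

import Mathlib

/-- KL divergence between two distributions on a finite set,
with the convention `0 * log 0 = 0` (automatic in Lean). -/
noncomputable def KL {A : Type*} [Fintype A] (p q : A → ℝ) : ℝ :=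
  ∑ a, p a * Real.log (p a / q a)

/-- Normalization constant `Z_λ = ∑_a q(a) e^{A(a)/λ}`. -/
noncomputable def Zfun {A : Type*} [Fintype A] (q : A → ℝ) (Adv : A → ℝ) (lam : ℝ) : ℝ :=
  ∑ a, q a * Real.exp (Adv a / lam)

/-- The exponentially tilted distribution `π^λ(a) = q(a) e^{A(a)/λ} / Z_λ`. -/
noncomputable def piLam {A : Type*} [Fintype A] (q : A → ℝ) (Adv : A → ℝ) (lam : ℝ)
    (a : A) : ℝ :=
  q a * Real.exp (Adv a / lam) / Zfun q Adv lam

/-- Per-state constrained Lagrangian problem: when `KL(π^λ ‖ q) > ε` and `λ' ≥ λ` is such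
that `KL(π^{λ'} ‖ q) = ε`, the distribution `π^{λ'}` maximizes
`p ↦ ∑_a p(a) A(a) − λ · KL(p ‖ q)` over distributions `p` with `KL(p ‖ q) ≤ ε`. -/
theorem gibbs_constrained_optimal
    {A : Type*} [Fintype A] [Nonempty A]
    (q : A → ℝ) (hqpos : ∀ a, 0 < q a) (hqsum : ∑ a, q a = 1)
    (Adv : A → ℝ) (lam lam' ε : ℝ) (hlam : 0 < lam) (hε : 0 < ε)
    (hviol : ε < KL (piLam q Adv lam) q)
    (hle : lam ≤ lam')
    (hbind : KL (piLam q Adv lam') q = ε) :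
    ∀ p : A → ℝ, (∀ a, 0 ≤ p a) → ∑ a, p a = 1 → KL p q ≤ ε →
      ∑ a, p a * Adv a - lam * KL p q ≤
        ∑ a, piLam q Adv lam' a * Adv a - lam * KL (piLam q Adv lam') q := by
  intro p hp hps hkl
  have hl' : 0 < lam' := lt_of_lt_of_le hlam hle
  have hZ : 0 < Zfun q Adv lam' :=
    Finset.sum_pos (fun a _ => mul_pos (hqpos a) (Real.exp_pos _)) Finset.univ_nonempty
  have hpi : ∀ a, 0 < piLam q Adv lam' a := fun a =>
    div_pos (mul_pos (hqpos a) (Real.exp_pos _)) hZ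
  have hpis : ∑ a, piLam q Adv lam' a = 1 := by
    unfold piLam
    rw [← Finset.sum_div]
    exact div_self hZ.ne'
  have hlogpi : ∀ a, Real.log (piLam q Adv lam' a) =
      Real.log (q a) + Adv a / lam' - Real.log (Zfun q Adv lam') := by
    intro a
    unfold piLam
    rw [Real.log_div (mul_pos (hqpos a) (Real.exp_pos _)).ne' hZ.ne',
      Real.log_mul (hqpos a).ne' (Real.exp_pos _).ne', Real.log_exp]
  have hAdv : ∀ a, Adv a = lam' * (Real.log (piLam q Adv lam' a) - Real.log (q a)
      + Real.log (Zfun q Adv lam')) := by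
    intro a
    rw [hlogpi a]
    field_simp
    ring
  have hub : ∑ a, p a * Adv a - lam' * KL p q ≤ lam' * Real.log (Zfun q Adv lam') := by
    have key : ∀ a, p a * Adv a - lam' * (p a * Real.log (p a / q a)) ≤
        lam' * Real.log (Zfun q Adv lam') * p a + lam' * (piLam q Adv lam' a - p a) := by
      intro a
      rcases (hp a).eq_or_lt with h | h
      · rw [← h]
        have := mul_pos hl' (hpi a)
        simp only [zero_mul, mul_zero, sub_zero, zero_add]
        exact this.le
      · have h1 := Real.log_le_sub_one_of_pos (div_pos (hpi a) h)
        rw [Real.log_div (hpi a).ne' h.ne'] at h1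
        have h2 := mul_le_mul_of_nonneg_left h1 (mul_pos hl' h).le
        have h3 : lam' * p a * (piLam q Adv lam' a / p a - 1) =
            lam' * (piLam q Adv lam' a - p a) := by
          field_simp
        rw [h3] at h2
        rw [Real.log_div h.ne' (hqpos a).ne']
        have h4 : p a * Adv a = p a * (lam' * (Real.log (piLam q Adv lam' a) - Real.log (q a)
            + Real.log (Zfun q Adv lam'))) := congrArg (p a * ·) (hAdv a)
        rw [h4]
        linarith
    have hs := Finset.sum_le_sum (fun a (_ : a ∈ Finset.univ) => key a)
    rw [Finset.sum_sub_distrib, Finset.sum_add_distrib, ← Finset.mul_sum, ← Finset.mul_sum,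
      ← Finset.mul_sum, Finset.sum_sub_distrib, hps, hpis] at hs
    unfold KL
    linarith
  have heq : ∑ a, piLam q Adv lam' a * Adv a - lam' * KL (piLam q Adv lam') q =
      lam' * Real.log (Zfun q Adv lam') := by
    unfold KL
    rw [Finset.mul_sum, ← Finset.sum_sub_distrib]
    have : ∀ a ∈ Finset.univ, piLam q Adv lam' a * Adv a -
        lam' * (piLam q Adv lam' a * Real.log (piLam q Adv lam' a / q a)) =
        lam' * Real.log (Zfun q Adv lam') * piLam q Adv lam' a := by
      intro a _
      rw [Real.log_div (hpi a).ne' (hqpos a).ne']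
      have h4 := congrArg (piLam q Adv lam' a * ·) (hAdv a)
      rw [h4]
      ring
    rw [Finset.sum_congr rfl this, ← Finset.mul_sum, hpis, mul_one]
  have hmul := mul_le_mul_of_nonneg_left hkl (sub_nonneg.mpr hle)
  rw [hbind] at heq ⊢
  linarith
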